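/- Every Darboux polynomial of the Halphen system is, up to a nonzero multiplicative constant, of the form F₁^{i₁}·F₂^{i₂}·F₃^{i₃} for some non-negative integers i₁, i₂, i₃ with i₁+i₂+i₃ > 0, where F₁ = x₁−x₂, F₂ = x₂−x₃, F₃ = x₃−x₁. That is, if F ∈ ℂ[x₁,x₂,x₃] is non-constant and d_H(F) = P·F for some P ∈ ℂ[x₁,x₂,x₃], then F = α·(x₁−x₂)^{i₁}(x₂−x₃)^{i₂}(x₃−x₁)^{i₃} for some α ∈ ℂ, α ≠ 0. -/

import Mathlib

open MvPolynomial

/-- Components of the Halphen vector field: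
`V₁ = x₂x₃ − x₁(x₂+x₃)`, `V₂ = x₃x₁ − x₂(x₃+x₁)`, `V₃ = x₁x₂ − x₃(x₁+x₂)`. -/
noncomputable def V1 : MvPolynomial (Fin 3) ℂ := X 1 * X 2 - X 0 * (X 1 + X 2)
noncomputable def V2 : MvPolynomial (Fin 3) ℂ := X 2 * X 0 - X 1 * (X 2 + X 0)
noncomputable def V3 : MvPolynomial (Fin 3) ℂ := X 0 * X 1 - X 2 * (X 0 + X 1)

/-- The Halphen derivation `d_H(F) = V₁∂₁F + V₂∂₂F + V₃∂₃F` on `ℂ[x₁,x₂,x₃]`. -/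
noncomputable def dH (F : MvPolynomial (Fin 3) ℂ) : MvPolynomial (Fin 3) ℂ :=
  V1 * pderiv 0 F + V2 * pderiv 1 F + V3 * pderiv 2 F

/-!
On the plane where two coordinates equal `y` and the third is `z`, the Halphen field is
`-y² ∂_y + (y² - 2yz) ∂_z`. It has the rational first integral `c = (y - z) / y²`, so in the
coordinates `(c, y)` it becomes `-y² ∂_y`, and a Darboux polynomial with cofactor `P` restricts to
a solution `φ` of `-y² φ' = P φ` over `K[c]`. If `φ ≠ 0`, comparing orders at `y = 0` and degrees
in `y` forces the restriction of `P` to be a `K[c]`-multiple of `y`.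

Split off the maximal powers of the `xᵢ - xⱼ`. The remaining factor has nonzero restriction to all
three planes; since its cofactor has degree at most one, the cofactor vanishes. A first integral is
constant on the plane `x₂ = x₃`, and subtracting this constant leaves a multiple of `x₂ - x₃`. The
cofactor of the quotient is `2 x₁`, which restricts to `2y - 2cy²`, so the quotient is again
divisible by `x₂ - x₃`. Since this repeats indefinitely, the quotient is zero.
-/

section General

theorem exists_eq_prod_pow_mul_and_forall_not_dvd {ι M : Type*} [Fintype ι]
    [CommMonoidWithZero M] [WfDvdMonoid M] {p : ι → M} (hp : ∀ i, ¬IsUnit (p i))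
    {a : M} (ha : a ≠ 0) :
    ∃ (n : ι → ℕ) (b : M), a = (∏ i, p i ^ n i) * b ∧ ∀ i, ¬p i ∣ b := by
  classical
  induction a using (wellFounded_dvdNotUnit (α := M)).induction with
  | _ a ih =>
    by_cases hdvd : ∀ i, ¬p i ∣ a
    · exact ⟨0, a, by simp, hdvd⟩
    push Not at hdvd
    obtain ⟨i, q, rfl⟩ := hdvd
    have hq : q ≠ 0 := right_ne_zero_of_mul ha
    obtain ⟨n, b, rfl, hb⟩ := ih q ⟨hq, p i, hp i, mul_comm _ _⟩ hq
    refine ⟨n + Pi.single i 1, b, ?_, hb⟩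
    simp only [Pi.add_apply, pow_add, Finset.prod_mul_distrib, Pi.single_apply, pow_ite, pow_one,
      pow_zero, Fintype.prod_ite_eq']
    rw [mul_comm _ (p i), mul_assoc]

theorem dvd_aeval_sub_aeval {σ R A : Type*} [CommSemiring R] [CommRing A] [Algebra R A]
    {a : A} {f g : σ → A} (h : ∀ i, a ∣ f i - g i) (p : MvPolynomial σ R) :
    a ∣ aeval f p - aeval g p := by
  have hcomp : (Ideal.Quotient.mkₐ R (Ideal.span {a})).comp (aeval f) =
      (Ideal.Quotient.mkₐ R (Ideal.span {a})).comp (aeval g) :=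
    algHom_ext fun i => by
      simpa [Ideal.Quotient.eq, Ideal.mem_span_singleton] using h i
  exact Ideal.mem_span_singleton.mp <| Ideal.Quotient.eq.mp <| DFunLike.congr_fun hcomp p

theorem totalDegree_mkDerivation_le {σ R : Type*} [CommSemiring R] {f : σ → MvPolynomial σ R}
    {d : ℕ} (hf : ∀ i, (f i).totalDegree ≤ d + 1) (p : MvPolynomial σ R) :
    (mkDerivation R f p).totalDegree ≤ p.totalDegree + d := by
  rw [p.as_sum, map_sum, ← p.as_sum]
  refine totalDegree_finsetSum_le fun s hs => ?_
  rw [mkDerivation_monomial]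
  refine (totalDegree_smul_le _ _).trans (totalDegree_finsetSum_le fun i hi => ?_)
  have hpos : 1 ≤ s i := Nat.one_le_iff_ne_zero.mpr (Finsupp.mem_support_iff.mp hi)
  have hsplit : (s - Finsupp.single i 1).degree + 1 = s.degree := by
    conv_rhs => rw [← tsub_add_cancel_of_le (Finsupp.single_le_iff.mpr hpos)]
    simp
  have hs' : s.degree ≤ p.totalDegree := le_totalDegree hs
  have hmon : (monomial (s - Finsupp.single i 1) (s i : R)).totalDegree ≤
      (s - Finsupp.single i 1).degree := totalDegree_monomial_le _ _
  have := totalDegree_mul (monomial (s - Finsupp.single i 1) (s i : R)) (f i)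
  have := hf i
  simp only [smul_eq_mul]
  omega

theorem eq_C_add_sum_of_totalDegree_le_one {σ R : Type*} [Fintype σ] [CommSemiring R]
    {p : MvPolynomial σ R} (hp : p.totalDegree ≤ 1) :
    p = C (coeff 0 p) + ∑ i, C (coeff (Finsupp.single i 1) p) * X i := by
  have hlin : homogeneousComponent 1 p = ∑ i, C (coeff (Finsupp.single i 1) p) * X i := by
    have hhom := homogeneousComponent_isHomogeneous 1 p
    rw [← one_smul ℕ (homogeneousComponent 1 p), ← hhom.sum_X_mul_pderiv]
    refine Finset.sum_congr rfl fun i _ => ?_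
    have hdeg := (totalDegree_zero_iff_isHomogeneous _).mpr (hhom.pderiv (i := i))
    rw [totalDegree_eq_zero_iff_eq_C.mp hdeg, mul_comm]
    simp [coeff_pderiv, coeff_homogeneousComponent]
  have hsum : p = ∑ i ∈ Finset.range 2, homogeneousComponent i p := by
    conv_lhs => rw [← sum_homogeneousComponent p]
    refine Finset.sum_subset (by simpa using hp) fun i _ hi => ?_
    exact homogeneousComponent_eq_zero _ _ (by simpa using hi)
  rw [← hlin, ← homogeneousComponent_zero]
  simpa [Finset.sum_range_succ] using hsum

theorem exists_eq_C_mul_X_of_neg_X_sq_mul_derivative_eq {R : Type*} [CommRing R] [IsDomain R]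
    {p q : Polynomial R} (hq : q ≠ 0)
    (h : -(Polynomial.X ^ 2 * Polynomial.derivative q) = p * q) :
    ∃ a, p = Polynomial.C a * Polynomial.X := by
  have hX : Polynomial.X ∣ p := by
    by_contra hndvd
    have hpow (n : ℕ) : Polynomial.X ^ n ∣ q := by
      induction n with
      | zero => simp
      | succ n ih =>
        have hder : Polynomial.X ^ (n + 1) ∣ Polynomial.X ^ 2 * Polynomial.derivative q :=
          (pow_dvd_pow _ (by omega : n + 1 ≤ 2 + (n - 1))).trans <| by
            rw [pow_add]
            exact mul_dvd_mul_left _ (Polynomial.pow_sub_one_dvd_derivative_of_pow_dvd ih)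
        exact Polynomial.prime_X.pow_dvd_of_dvd_mul_left _ hndvd (h ▸ hder.neg_right)
    exact hq <| Polynomial.ext fun n => by
      simpa using Polynomial.X_pow_dvd_iff.mp (hpow (n + 1)) n n.lt_succ_self
  obtain ⟨r, rfl⟩ := hX
  have hrq : r * q = -(Polynomial.X * Polynomial.derivative q) :=
    mul_left_cancel₀ Polynomial.X_ne_zero (by linear_combination -h)
  have hdeg : (r * q).natDegree ≤ q.natDegree := by
    rw [hrq, Polynomial.natDegree_neg]
    by_cases hq' : q.natDegree = 0
    · simp [Polynomial.derivative_of_natDegree_zero hq']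
    · exact Polynomial.natDegree_mul_le.trans <| by
        rw [Polynomial.natDegree_X]
        have := Polynomial.natDegree_derivative_lt hq'
        omega
  have hr : r.natDegree = 0 := by
    by_cases hr₀ : r = 0
    · simp [hr₀]
    · rw [Polynomial.natDegree_mul hr₀ hq] at hdeg
      omega
  exact ⟨r.coeff 0, by rw [mul_comm, ← Polynomial.eq_C_of_natDegree_eq_zero hr]⟩

end General

section Cofactor

variable {R A : Type*} [CommSemiring R] [CommSemiring A] [Algebra R A] {D : Derivation R A A}

/-- `p` is a cofactor of `a` with respect to the derivation `D`: `D a = p * a`. For polynomial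
rings this says that `a` is a Darboux polynomial of `D`, with constants and `0` allowed. -/
def IsCofactor (D : Derivation R A A) (p a : A) : Prop :=
  D a = p * a

namespace IsCofactor

theorem mul {p q a b : A} (ha : IsCofactor D p a) (hb : IsCofactor D q b) :
    IsCofactor D (p + q) (a * b) := by
  simp only [IsCofactor] at *
  rw [D.leibniz, ha, hb, smul_eq_mul, smul_eq_mul]
  ring

theorem one : IsCofactor D 0 1 := by
  simp [IsCofactor]

theorem pow {p a : A} (h : IsCofactor D p a) (n : ℕ) : IsCofactor D (n * p) (a ^ n) := by
  induction n with
  | zero => simpa using one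
  | succ n ih => simpa only [Nat.cast_succ, add_one_mul, pow_succ] using ih.mul h

theorem prod {ι : Type*} {s : Finset ι} {p a : ι → A} (h : ∀ i ∈ s, IsCofactor D (p i) (a i)) :
    IsCofactor D (∑ i ∈ s, p i) (∏ i ∈ s, a i) := by
  induction s using Finset.cons_induction with
  | empty => simpa using one
  | cons i s hi ih =>
    simp only [Finset.forall_mem_cons, Finset.sum_cons, Finset.prod_cons] at h ⊢
    exact h.1.mul (ih h.2)

theorem of_mul_left {A : Type*} [CommRing A] [IsDomain A] [Algebra R A] {D : Derivation R A A}
    {p q a b : A} (ha : IsCofactor D q a) (ha₀ : a ≠ 0) (hab : IsCofactor D p (a * b)) :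
    IsCofactor D (p - q) b := by
  simp only [IsCofactor, D.leibniz, smul_eq_mul] at *
  apply mul_left_cancel₀ ha₀
  linear_combination hab - b * ha

end IsCofactor

end Cofactor

section Halphen

variable (R : Type*) [CommRing R]

/-- The Halphen derivation over an arbitrary commutative ring, as a bundled derivation. Indices are
taken modulo `3`, so that `X k`, `X (k + 1)`, `X (k + 2)` are the three variables. -/
noncomputable def halphenDerivation :
    Derivation R (MvPolynomial (Fin 3) R) (MvPolynomial (Fin 3) R) :=
  mkDerivation R fun k => X (k + 1) * X (k + 2) - X k * (X (k + 1) + X (k + 2))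

theorem dH_eq_halphenDerivation (F : MvPolynomial (Fin 3) ℂ) : dH F = halphenDerivation ℂ F := by
  have hD : V1 • pderiv 0 + V2 • pderiv 1 + V3 • pderiv 2 = halphenDerivation ℂ := by
    refine derivation_ext fun k => ?_
    fin_cases k <;> simp [halphenDerivation, V1, V2, V3, mkDerivation_X, pderiv_X]
  exact DFunLike.congr_fun hD F

/-- The three linear Darboux polynomials of the Halphen derivation: `F₂`, `F₃`, `F₁` for
`k = 0, 1, 2`. The index is that of the missing variable. -/
noncomputable def halphenFactor (k : Fin 3) : MvPolynomial (Fin 3) R :=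
  X (k + 1) - X (k + 2)

/-- Restriction to the plane `halphenFactor R k = 0`, in the coordinates `(c, y)` with inner
variable `c = (y - z) / y²` and outer variable `y`, where `z` is the value of `X k` and `y` that of
the other two variables. -/
noncomputable def planeRestriction (k : Fin 3) :
    MvPolynomial (Fin 3) R →ₐ[R] Polynomial (Polynomial R) :=
  aeval <| Function.update (fun _ => Polynomial.X) k
    (Polynomial.X - Polynomial.C Polynomial.X * Polynomial.X ^ 2)

variable {R}

theorem planeRestriction_X_self (k : Fin 3) : planeRestriction R k (X k) =
    Polynomial.X - Polynomial.C Polynomial.X * Polynomial.X ^ 2 := by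
  simp [planeRestriction]

theorem planeRestriction_X_of_ne {k l : Fin 3} (h : l ≠ k) :
    planeRestriction R k (X l) = Polynomial.X := by
  simp [planeRestriction, h]

theorem planeRestriction_affine (k : Fin 3) (b : R) (l : Fin 3 → R) :
    planeRestriction R k (C b + ∑ i, C (l i) * X i) = Polynomial.C (Polynomial.C b) +
      Polynomial.C (Polynomial.C (∑ i, l i)) * Polynomial.X -
      Polynomial.C (Polynomial.C (l k) * Polynomial.X) * Polynomial.X ^ 2 := by
  simp only [Fin.sum_univ_three, map_add, map_mul]
  fin_cases k <;> simp [planeRestriction] <;> ring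

theorem isCofactor_halphenFactor (k : Fin 3) :
    IsCofactor (halphenDerivation R) (-2 * X k) (halphenFactor R k) := by
  simp only [IsCofactor, halphenDerivation, halphenFactor, map_sub, mkDerivation_X]
  fin_cases k <;> simp <;> ring

theorem halphenFactor_ne_zero [Nontrivial R] (k : Fin 3) : halphenFactor R k ≠ 0 :=
  sub_ne_zero.mpr <| X_injective.ne (by fin_cases k <;> decide)

theorem not_isUnit_halphenFactor [Nontrivial R] (k : Fin 3) : ¬IsUnit (halphenFactor R k) :=
  fun h => by simpa [halphenFactor] using h.map constantCoeff

theorem planeRestriction_halphenDerivation (k : Fin 3) (F : MvPolynomial (Fin 3) R) :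
    planeRestriction R k (halphenDerivation R F) =
      -(Polynomial.X ^ 2 * Polynomial.derivative (planeRestriction R k F)) := by
  induction F using MvPolynomial.induction_on with
  | C a => simp
  | add F G hF hG =>
    simp only [map_add, hF, hG]
    ring
  | mul_X F l hF =>
    have hX : planeRestriction R k (halphenDerivation R (X l)) =
        -(Polynomial.X ^ 2 * Polynomial.derivative (planeRestriction R k (X l))) := by
      simp only [halphenDerivation, mkDerivation_X, map_sub, map_mul, map_add]
      fin_cases k <;> fin_cases l <;> simp [planeRestriction] <;> ring
    simp only [Derivation.leibniz, smul_eq_mul, map_add, map_mul, hF, hX, Polynomial.derivative_mul]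
    ring

theorem evalEval_planeRestriction (k : Fin 3) (c y : R) (F : MvPolynomial (Fin 3) R) :
    (planeRestriction R k F).evalEval c y =
      eval (Function.update (fun _ => y) k (y - c * y ^ 2)) F := by
  induction F using MvPolynomial.induction_on with
  | C a => simp
  | add F G hF hG => simp only [map_add, Polynomial.evalEval_add, hF, hG]
  | mul_X F l hF =>
    rw [map_mul, Polynomial.evalEval_mul, hF, map_mul, eval_X]
    by_cases hl : l = k
    · subst hl
      simp [planeRestriction_X_self, Polynomial.evalEval]
    · simp [planeRestriction_X_of_ne hl, hl]

theorem planeRestriction_coeff_zero (k : Fin 3) (F : MvPolynomial (Fin 3) R) :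
    (planeRestriction R k F).coeff 0 = Polynomial.C (constantCoeff F) := by
  have : (Polynomial.constantCoeff.comp (planeRestriction R k).toRingHom) =
      Polynomial.C.comp constantCoeff := by
    refine ringHom_ext (fun a => ?_) fun l => ?_
    · simp
    · by_cases hl : l = k
      · subst hl
        simp [planeRestriction_X_self]
      · simp [planeRestriction_X_of_ne hl]
  exact DFunLike.congr_fun this F

theorem totalDegree_cofactor_le_one [IsDomain R] {P F : MvPolynomial (Fin 3) R} (hF₀ : F ≠ 0)
    (hF : IsCofactor (halphenDerivation R) P F) : P.totalDegree ≤ 1 := by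
  by_cases hP : P = 0
  · simp [hP]
  have hfield (k : Fin 3) : (X (k + 1) * X (k + 2) - X k * (X (k + 1) + X (k + 2)) :
      MvPolynomial (Fin 3) R).totalDegree ≤ 1 + 1 :=
    (((isHomogeneous_X R _).mul (isHomogeneous_X R _)).sub ((isHomogeneous_X R _).mul
      ((isHomogeneous_X R _).add (isHomogeneous_X R _)))).totalDegree_le
  have hdeg : (P * F).totalDegree ≤ F.totalDegree + 1 :=
    hF ▸ totalDegree_mkDerivation_le hfield F
  rw [totalDegree_mul_of_isDomain hP hF₀] at hdeg
  omega

variable {K : Type*} [Field K]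

theorem planeRestriction_eq_zero_iff [Infinite K] (k : Fin 3) (F : MvPolynomial (Fin 3) K) :
    planeRestriction K k F = 0 ↔ halphenFactor K k ∣ F := by
  constructor
  · intro hF
    set g : Fin 3 → MvPolynomial (Fin 3) K := Function.update X (k + 1) (X (k + 2)) with hg
    have hsubst : aeval g F = 0 := by
      refine funext_set (fun _ => {0}ᶜ) (fun _ => (Set.finite_singleton 0).infinite_compl)
        fun v hv => ?_
      have hy : v (k + 2) ≠ 0 := hv (k + 2) trivial
      have hpoint : (fun l => eval v (g l)) = Function.update (fun _ => v (k + 2)) k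
          (v (k + 2) - (v (k + 2) - v k) / v (k + 2) ^ 2 * v (k + 2) ^ 2) := by
        rw [div_mul_cancel₀ _ (pow_ne_zero 2 hy), sub_sub_cancel]
        funext l
        fin_cases k <;> fin_cases l <;> simp [hg]
      have heval : eval v (aeval g F) = eval (fun l => eval v (g l)) F :=
        eval₂Hom_bind₁ _ _ _ _
      rw [heval, hpoint, ← evalEval_planeRestriction, hF, Polynomial.evalEval_zero, map_zero]
    have hdvd : halphenFactor K k ∣ aeval X F - aeval g F := by
      refine dvd_aeval_sub_aeval (fun l => ?_) F
      by_cases hl : l = k + 1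
      · subst hl
        simp [hg, halphenFactor]
      · simp [hg, hl]
    rwa [hsubst, sub_zero, aeval_X_left_apply] at hdvd
  · rintro ⟨G, rfl⟩
    have hfactor : planeRestriction K k (halphenFactor K k) = 0 := by
      rw [halphenFactor, map_sub, planeRestriction_X_of_ne (by simp),
        planeRestriction_X_of_ne (by simp), sub_self]
    rw [map_mul, hfactor, zero_mul]

theorem exists_planeRestriction_cofactor_eq [Infinite K] {k : Fin 3}
    {P F : MvPolynomial (Fin 3) K} (hF : IsCofactor (halphenDerivation K) P F)
    (hdvd : ¬halphenFactor K k ∣ F) :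
    ∃ a, planeRestriction K k P = Polynomial.C a * Polynomial.X := by
  refine exists_eq_C_mul_X_of_neg_X_sq_mul_derivative_eq
    (mt (planeRestriction_eq_zero_iff k F).mp hdvd) ?_
  rw [← planeRestriction_halphenDerivation, hF, map_mul]

theorem cofactor_eq_zero_of_forall_not_dvd [Infinite K] {P F : MvPolynomial (Fin 3) K}
    (hF : IsCofactor (halphenDerivation K) P F) (hdvd : ∀ k, ¬halphenFactor K k ∣ F) :
    P = 0 := by
  have hF₀ : F ≠ 0 := fun h => hdvd 0 (h ▸ dvd_zero _)
  obtain ⟨b, l, rfl⟩ : ∃ (b : K) (l : Fin 3 → K), P = C b + ∑ i, C (l i) * X i :=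
    ⟨_, _, eq_C_add_sum_of_totalDegree_le_one (totalDegree_cofactor_le_one hF₀ hF)⟩
  have hcoeff (k : Fin 3) : b = 0 ∧ l k = 0 := by
    obtain ⟨a, ha⟩ := exists_planeRestriction_cofactor_eq hF (hdvd k)
    rw [planeRestriction_affine] at ha
    refine ⟨?_, ?_⟩
    · simpa using congrArg (Polynomial.coeff · 0) ha
    · simpa [Polynomial.coeff_X, -map_mul] using congrArg (Polynomial.coeff · 2) ha
  simp [(hcoeff 0).1, fun k => (hcoeff k).2]

theorem halphenFactor_dvd_of_isCofactor_C_mul_X [Infinite K] {k : Fin 3} {a : K} (ha : a ≠ 0)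
    {F : MvPolynomial (Fin 3) K} (hF : IsCofactor (halphenDerivation K) (C a * X k) F) :
    halphenFactor K k ∣ F := by
  by_contra hdvd
  obtain ⟨b, hb⟩ := exists_planeRestriction_cofactor_eq hF hdvd
  have := congrArg (Polynomial.coeff · 2) hb
  simp [planeRestriction_X_self, Polynomial.coeff_X, ha] at this

theorem eq_zero_of_isCofactor_C_mul_X [Infinite K] {k : Fin 3} {a : K}
    (ha : ∀ m : ℕ, a + 2 * m ≠ 0) {F : MvPolynomial (Fin 3) K}
    (hF : IsCofactor (halphenDerivation K) (C a * X k) F) : F = 0 := by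
  have hpow (m : ℕ) : halphenFactor K k ^ m ∣ F := by
    induction m with
    | zero => simp
    | succ m ih =>
      obtain ⟨G, rfl⟩ := ih
      have hG := ((isCofactor_halphenFactor k).pow m).of_mul_left
        (pow_ne_zero m (halphenFactor_ne_zero k)) hF
      have hcofactor : C a * X k - (m : MvPolynomial (Fin 3) K) * (-2 * X k) =
          C (a + 2 * m) * X k := by
        simp only [map_add, map_mul, map_ofNat, map_natCast]
        ring
      rw [hcofactor] at hG
      rw [pow_succ]
      exact mul_dvd_mul_left _ (halphenFactor_dvd_of_isCofactor_C_mul_X (ha m) hG)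
  by_contra hF₀
  obtain ⟨m, hm⟩ := FiniteMultiplicity.of_not_isUnit (not_isUnit_halphenFactor k) hF₀
  exact hm (hpow (m + 1))

theorem eq_C_of_halphenDerivation_eq_zero [CharZero K] {F : MvPolynomial (Fin 3) K}
    (hF : halphenDerivation K F = 0) : F = C (constantCoeff F) := by
  have : Infinite K := CharZero.infinite K
  have hder : Polynomial.derivative (planeRestriction K 0 F) = 0 := by
    simpa [hF] using planeRestriction_halphenDerivation 0 F
  have hrestrict : planeRestriction K 0 (F - C (constantCoeff F)) = 0 := by
    rw [map_sub, Polynomial.eq_C_of_derivative_eq_zero hder, planeRestriction_coeff_zero]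
    simp
  obtain ⟨G, hG⟩ := (planeRestriction_eq_zero_iff 0 _).mp hrestrict
  have hmul : IsCofactor (halphenDerivation K) 0 (halphenFactor K 0 * G) := by
    rw [← hG]
    simp [IsCofactor, hF]
  have hcofactor : IsCofactor (halphenDerivation K) (C 2 * X 0) G := by
    simpa [map_ofNat] using
      (isCofactor_halphenFactor 0).of_mul_left (halphenFactor_ne_zero 0) hmul
  have htwo (m : ℕ) : (2 : K) + 2 * m ≠ 0 := by
    exact_mod_cast (by omega : 2 + 2 * m ≠ 0)
  rwa [eq_zero_of_isCofactor_C_mul_X htwo hcofactor, mul_zero, sub_eq_zero] at hG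

end Halphen

theorem halphen_darboux_classification_general {K : Type*} [Field K] [CharZero K]
    (F : MvPolynomial (Fin 3) K) (hnc : ∀ c : K, F ≠ C c)
    (P : MvPolynomial (Fin 3) K) (hD : halphenDerivation K F = P * F) :
    ∃ (α : K) (i₁ i₂ i₃ : ℕ), α ≠ 0 ∧ 0 < i₁ + i₂ + i₃ ∧
      F = C α * (X 0 - X 1) ^ i₁ * (X 1 - X 2) ^ i₂ * (X 2 - X 0) ^ i₃ := by
  have : Infinite K := CharZero.infinite K
  have hF₀ : F ≠ 0 := by simpa using hnc 0
  obtain ⟨n, G, rfl, hdvd⟩ :=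
    exists_eq_prod_pow_mul_and_forall_not_dvd (not_isUnit_halphenFactor (R := K)) hF₀
  have hG : IsCofactor (halphenDerivation K) _ G :=
    (IsCofactor.prod fun k _ => (isCofactor_halphenFactor k).pow (n k)).of_mul_left
      (left_ne_zero_of_mul hF₀) hD
  have hDG : halphenDerivation K G = 0 := by
    rw [hG, cofactor_eq_zero_of_forall_not_dvd hG hdvd, zero_mul]
  obtain ⟨α, rfl⟩ : ∃ α, G = C α := ⟨_, eq_C_of_halphenDerivation_eq_zero hDG⟩
  refine ⟨α, n 2, n 0, n 1, ?_, ?_, ?_⟩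
  · rintro rfl
    simp at hF₀
  · by_contra hsum
    have hn : n = 0 := by
      funext k
      fin_cases k <;> simp <;> omega
    exact hnc α (by simp [hn])
  · simp [Fin.prod_univ_three, halphenFactor]
    ring

/-- Every Darboux polynomial of the Halphen system is, up to a nonzero
multiplicative constant, of the form `F₁^{i₁}·F₂^{i₂}·F₃^{i₃}` with `i₁+i₂+i₃ > 0`,
where `F₁ = x₁−x₂`, `F₂ = x₂−x₃`, `F₃ = x₃−x₁`. -/
theorem halphen_darboux_classification
    (F : MvPolynomial (Fin 3) ℂ) (hnc : ∀ c : ℂ, F ≠ C c)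
    (P : MvPolynomial (Fin 3) ℂ) (hD : dH F = P * F) :
    ∃ (α : ℂ) (i₁ i₂ i₃ : ℕ), α ≠ 0 ∧ 0 < i₁ + i₂ + i₃ ∧
      F = C α * (X 0 - X 1) ^ i₁ * (X 1 - X 2) ^ i₂ * (X 2 - X 0) ^ i₃ := by
  exact halphen_darboux_classification_general F hnc P (dH_eq_halphenDerivation F ▸ hD)
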